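/- arXiv:1906.05568 — 2 statements merged into one kernel-verified Lean document; each statement's English description precedes it below -/
import Mathlib

section
/- Let p ∈ (0,1/2] and β > 0. Suppose f ∈ L²({0,1}^n, μ_p) has β-small generalised influences, i.e. I_S(f) ≤ β·𝔼_{μ_p}[f²] for all S ⊆ [n]. Then ‖T_{1/5} f‖₄ ≤ β^{1/4}·‖f‖₂. -/
open Finset

namespace GlobalHC

variable {n : ℕ}

/-- Expectation with respect to the `p`-biased measure on `{0,1}^n`. -/
noncomputable def Ep (p : ℝ) (f : (Fin n → Bool) → ℝ) : ℝ :=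
  ∑ x : Fin n → Bool, (∏ i, if x i then p else 1 - p) * f x

/-- The `r`-norm with respect to the `p`-biased measure. -/
noncomputable def pnorm (p r : ℝ) (f : (Fin n → Bool) → ℝ) : ℝ :=
  (Ep p fun x => |f x| ^ r) ^ (1 / r)

/-- The `p`-biased character `χ_S`. -/
noncomputable def chi (p : ℝ) (S : Finset (Fin n)) (x : Fin n → Bool) : ℝ :=
  ∏ i ∈ S, ((if x i then (1 : ℝ) else 0) - p) / Real.sqrt (p * (1 - p))

/-- The `p`-biased Fourier coefficient `f̂(S)`. -/
noncomputable def coeff (p : ℝ) (f : (Fin n → Bool) → ℝ) (S : Finset (Fin n)) : ℝ :=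
  Ep p fun x => f x * chi p S x

/-- The derivative `D_S f = Σ_{T ⊇ S} f̂(T) χ_{T∖S}`. -/
noncomputable def derivS (p : ℝ) (S : Finset (Fin n)) (f : (Fin n → Bool) → ℝ) :
    (Fin n → Bool) → ℝ :=
  fun x => ∑ T ∈ Finset.univ.filter (fun T => S ⊆ T), coeff p f T * chi p (T \ S) x

/-- The generalised influence `I_S(f) = σ^{-2|S|} Σ_{T ⊇ S} f̂(T)²`. -/
noncomputable def genInf (p : ℝ) (S : Finset (Fin n)) (f : (Fin n → Bool) → ℝ) : ℝ :=
  (∑ T ∈ Finset.univ.filter (fun T => S ⊆ T), coeff p f T ^ 2) / (p * (1 - p)) ^ S.card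

/-- The noise operator `T_ρ f = Σ_S ρ^{|S|} f̂(S) χ_S`. -/
noncomputable def noise (p ρ : ℝ) (f : (Fin n → Bool) → ℝ) : (Fin n → Bool) → ℝ :=
  fun x => ∑ S : Finset (Fin n), ρ ^ S.card * coeff p f S * chi p S x

/-- The degree-`r` truncation `f^{≤ r}`. -/
noncomputable def trunc (p : ℝ) (r : ℕ) (f : (Fin n → Bool) → ℝ) : (Fin n → Bool) → ℝ :=
  fun x => ∑ S ∈ Finset.univ.filter (fun S : Finset (Fin n) => S.card ≤ r),
    coeff p f S * chi p S x

/-- The restriction `f_{J→1}` setting all coordinates in `J` to `1`. -/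
def restrict1 (J : Finset (Fin n)) (f : (Fin n → Bool) → ℝ) : (Fin n → Bool) → ℝ :=
  fun x => f (fun i => if i ∈ J then true else x i)

/-- `f` is `(r,δ)`-global (for the `p`-biased measure). -/
def IsGlobal (p r δ : ℝ) (f : (Fin n → Bool) → ℝ) : Prop :=
  ∀ J : Finset (Fin n), (J.card : ℝ) ≤ r → Ep p (restrict1 J f) ≤ Ep p f + δ

/-- The total influence `I[f] = Σ_i Pr_{μ_p}[f(x ⊕ e_i) ≠ f(x)]`. -/
noncomputable def totalInf (p : ℝ) (f : (Fin n → Bool) → ℝ) : ℝ :=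
  ∑ i : Fin n, Ep p fun x => if f (Function.update x i (!x i)) = f x then 0 else 1

/-- Noise stability `Stab_ρ(f) = Σ_S ρ^{|S|} f̂(S)²` (w.r.t. `μ_p`). -/
noncomputable def stab (p ρ : ℝ) (f : (Fin n → Bool) → ℝ) : ℝ :=
  ∑ S : Finset (Fin n), ρ ^ S.card * coeff p f S ^ 2

/-- `f` is monotone. -/
def Mono (f : (Fin n → Bool) → ℝ) : Prop :=
  ∀ x y : Fin n → Bool, (∀ i, x i ≤ y i) → f x ≤ f y


noncomputable def cc (p : ℝ) (b : Bool) : ℝ :=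
  ((if b then (1 : ℝ) else 0) - p) / Real.sqrt (p * (1 - p))

def ww (p : ℝ) (b : Bool) : ℝ := if b then p else 1 - p

lemma chi_eq (p : ℝ) (S : Finset (Fin n)) (x : Fin n → Bool) :
    chi p S x = ∏ i ∈ S, cc p (x i) := rfl

lemma Ep_eq (p : ℝ) (f : (Fin n → Bool) → ℝ) :
    Ep p f = ∑ x : Fin n → Bool, (∏ i, ww p (x i)) * f x := rfl

lemma Ep_mono {p : ℝ} (hp : 0 < p) (hp' : p ≤ 1/2) {f g : (Fin n → Bool) → ℝ}
    (h : ∀ x, f x ≤ g x) : Ep p f ≤ Ep p g := by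
  unfold Ep
  refine Finset.sum_le_sum fun x _ => mul_le_mul_of_nonneg_left (h x) ?_
  refine Finset.prod_nonneg fun i _ => ?_
  split_ifs <;> linarith

lemma Ep_add (p : ℝ) (f g : (Fin n → Bool) → ℝ) :
    Ep p (fun x => f x + g x) = Ep p f + Ep p g := by
  simp [Ep, mul_add, Finset.sum_add_distrib]

lemma Ep_smul (p c : ℝ) (f : (Fin n → Bool) → ℝ) :
    Ep p (fun x => c * f x) = c * Ep p f := by
  simp only [Ep, Finset.mul_sum]
  exact Finset.sum_congr rfl fun x _ => by ring

lemma Ep_sum (p : ℝ) {ι : Type*} (s : Finset ι) (f : ι → (Fin n → Bool) → ℝ) :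
    Ep p (fun x => ∑ j ∈ s, f j x) = ∑ j ∈ s, Ep p (f j) := by
  simp only [Ep, Finset.mul_sum]
  exact Finset.sum_comm

lemma Ep_nonneg {p : ℝ} (hp : 0 < p) (hp' : p ≤ 1/2) {f : (Fin n → Bool) → ℝ}
    (h : ∀ x, 0 ≤ f x) : 0 ≤ Ep p f := by
  have := Ep_mono hp hp' (f := fun _ => 0) (g := f) h
  simpa [Ep] using this

/-- averaging over a single coordinate -/
lemma Ep_avg (p : ℝ) (i : Fin n) (f : (Fin n → Bool) → ℝ) :
    Ep p f = Ep p (fun x => p * f (Function.update x i true)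
      + (1 - p) * f (Function.update x i false)) := by
  let e : (Fin n → Bool) → (Fin n → Bool) := fun x => Function.update x i (!x i)
  have he : Function.Involutive e := by
    intro x
    ext j
    by_cases h : j = i
    · subst h; simp [e]
    · simp [e, h]
  have h1 : ∀ x : Fin n → Bool, p * f (Function.update x i true)
      + (1 - p) * f (Function.update x i false)
      = ww p (x i) * f x + ww p (!x i) * f (e x) := by
    intro x
    have hx : Function.update x i (x i) = x := Function.update_eq_self i x
    cases hb : x i
    · rw [hb] at hx
      simp only [e, hb, ww, hx]
      simp
      ring
    · rw [hb] at hx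
      simp only [e, hb, ww, hx]
      simp
  have hw : ∀ x : Fin n → Bool,
      ∏ j, ww p (x j) = ww p (x i) * ∏ j ∈ Finset.univ.erase i, ww p (x j) := fun x =>
    (Finset.mul_prod_erase _ _ (Finset.mem_univ i)).symm
  have hv : ∀ x : Fin n → Bool, ∏ j ∈ Finset.univ.erase i, ww p (e x j)
      = ∏ j ∈ Finset.univ.erase i, ww p (x j) := by
    intro x
    refine Finset.prod_congr rfl fun j hj => ?_
    simp [e, Finset.ne_of_mem_erase hj]
  simp only [h1, Ep_eq, mul_add, Finset.sum_add_distrib]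
  have h2 : ∑ x : Fin n → Bool, (∏ j, ww p (x j)) * (ww p (!x i) * f (e x))
      = ∑ x : Fin n → Bool, (∏ j, ww p (e x j)) * (ww p (x i) * f x) := by
    rw [← Equiv.sum_comp (Function.Involutive.toPerm e he)]
    refine Finset.sum_congr rfl fun x _ => ?_
    have : e x i = !x i := by simp [e]
    simp [he x, this]
  rw [h2, ← Finset.sum_add_distrib]
  refine Finset.sum_congr rfl fun x _ => ?_
  rw [hw (e x), hv, hw x]
  have : e x i = !x i := by simp [e]
  rw [this]
  have : ww p (x i) + ww p (!x i) = 1 := by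
    cases x i <;> simp [ww]
  linear_combination (-(ww p (x i) * (∏ j ∈ Finset.univ.erase i, ww p (x j)) * f x)) * this

lemma chi_update (p : ℝ) {i : Fin n} {S : Finset (Fin n)} (hi : i ∉ S) (x : Fin n → Bool)
    (b : Bool) : chi p S (Function.update x i b) = chi p S x := by
  rw [chi_eq, chi_eq]
  refine Finset.prod_congr rfl fun j hj => ?_
  rw [Function.update_of_ne]
  rintro rfl
  exact hi hj

lemma chi_insert (p : ℝ) {i : Fin n} {S : Finset (Fin n)} (hi : i ∉ S) (x : Fin n → Bool) :
    chi p (insert i S) x = cc p (x i) * chi p S x := by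
  rw [chi_eq, chi_eq, Finset.prod_insert hi]

lemma moments {p : ℝ} (hp : 0 < p) (hp' : p ≤ 1/2) :
    p * cc p true + (1 - p) * cc p false = 0 ∧
    p * cc p true ^ 2 + (1 - p) * cc p false ^ 2 = 1 ∧
    (p * cc p true ^ 3 + (1 - p) * cc p false ^ 3) ^ 2 ≤ 1 / (p * (1 - p)) ∧
    p * cc p true ^ 4 + (1 - p) * cc p false ^ 4 ≤ 1 / (p * (1 - p)) := by
  have hs : 0 < p * (1 - p) := mul_pos hp (by linarith)
  obtain ⟨r, hr⟩ : ∃ r, r = Real.sqrt (p * (1 - p)) := ⟨_, rfl⟩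
  have hr0 : 0 < r := hr ▸ Real.sqrt_pos.2 hs
  have hr2 : r ^ 2 = p * (1 - p) := by rw [hr]; exact Real.sq_sqrt hs.le
  have h1 : cc p true = (1 - p) / r := by simp [cc, hr]
  have h0 : cc p false = - p / r := by simp [cc, hr]
  rw [h1, h0, ← hr2]
  refine ⟨by field_simp; ring, ?_, ?_, ?_⟩
  · field_simp; rw [hr2]; ring
  · have : p * ((1 - p) / r) ^ 3 + (1 - p) * (-p / r) ^ 3 = (1 - 2 * p) / r := by
      have : p * (1 - p) ^ 3 + (1 - p) * (-p) ^ 3 = r ^ 2 * (1 - 2 * p) := by rw [hr2]; ring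
      rw [div_pow, div_pow, eq_div_iff hr0.ne']
      field_simp
      linear_combination this
    rw [this, div_pow]
    apply div_le_div_of_nonneg_right _ (by positivity)
    nlinarith
  · have : p * ((1 - p) / r) ^ 4 + (1 - p) * (-p / r) ^ 4 = (1 - 3 * r ^ 2) / r ^ 2 := by
      have : p * (1 - p) ^ 4 + (1 - p) * (-p) ^ 4 = r ^ 2 * (1 - 3 * r ^ 2) := by rw [hr2]; ring
      rw [div_pow, div_pow, eq_div_iff (by positivity)]
      field_simp
      linear_combination this
    rw [this]
    apply div_le_div_of_nonneg_right _ (by positivity)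
    nlinarith

lemma pointwise {p : ℝ} (hp : 0 < p) (hp' : p ≤ 1/2) (a b c d : ℝ) :
    p * ((a + 1/5 * cc p true * b) ^ 2 * (c + 1/5 * cc p true * d) ^ 2)
    + (1 - p) * ((a + 1/5 * cc p false * b) ^ 2 * (c + 1/5 * cc p false * d) ^ 2)
    ≤ a ^ 2 * c ^ 2 + 4/25 * (a ^ 2 * d ^ 2) + 4/25 * (b ^ 2 * c ^ 2)
      + (3/625) / (p * (1 - p)) * (b ^ 2 * d ^ 2) := by
  obtain ⟨m1, m2, m3, m4⟩ := moments hp hp'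
  generalize cc p true = u at *
  generalize cc p false = v at *
  obtain ⟨m, hm⟩ : ∃ m, m = p * u ^ 3 + (1 - p) * v ^ 3 := ⟨_, rfl⟩
  obtain ⟨q, hq⟩ : ∃ q, q = p * u ^ 4 + (1 - p) * v ^ 4 := ⟨_, rfl⟩
  rw [← hm] at m3
  rw [← hq] at m4
  have e : p * ((a + 1/5 * u * b) ^ 2 * (c + 1/5 * u * d) ^ 2)
    + (1 - p) * ((a + 1/5 * v * b) ^ 2 * (c + 1/5 * v * d) ^ 2)
    = a ^ 2 * c ^ 2 + 1/25 * (a ^ 2 * d ^ 2 + b ^ 2 * c ^ 2 + 4 * a * b * c * d)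
      + 2/125 * m * (a * b * d ^ 2 + b ^ 2 * c * d) + 1/625 * q * (b ^ 2 * d ^ 2) := by
    rw [hm, hq]
    linear_combination (2/5 * (a * b * c ^ 2 + a ^ 2 * c * d)) * m1
      + (1/25 * (a ^ 2 * d ^ 2 + b ^ 2 * c ^ 2 + 4 * a * b * c * d)) * m2
  rw [e]
  have hk : (3/625) / (p * (1 - p)) = 3/625 * (1 / (p * (1 - p))) := by ring
  rw [hk]
  generalize 1 / (p * (1 - p)) = K at *
  have t1 := sq_nonneg (a * d - b * c)
  have t2 := sq_nonneg (a * d - 1/5 * m * (b * d))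
  have t3 := sq_nonneg (b * c - 1/5 * m * (b * d))
  have t4 := mul_le_mul_of_nonneg_right m3 (sq_nonneg (b * d))
  have t5 := mul_le_mul_of_nonneg_right m4 (sq_nonneg (b * d))
  nlinarith

noncomputable def PP (p : ℝ) (U : Finset (Fin n)) (a : Finset (Fin n) → ℝ)
    (x : Fin n → Bool) : ℝ :=
  ∑ S ∈ U.powerset, (1/5) ^ S.card * a S * chi p S x

noncomputable def qq (U S : Finset (Fin n)) (a : Finset (Fin n) → ℝ) : ℝ :=
  ∑ T ∈ (U \ S).powerset, (4/25) ^ T.card * a (S ∪ T) ^ 2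

lemma qq_nonneg (U S : Finset (Fin n)) (a : Finset (Fin n) → ℝ) : 0 ≤ qq U S a :=
  Finset.sum_nonneg fun _ _ => by positivity

lemma PP_insert (p : ℝ) {i : Fin n} {U : Finset (Fin n)} (hi : i ∉ U)
    (a : Finset (Fin n) → ℝ) (x : Fin n → Bool) :
    PP p (insert i U) a x = PP p U a x + 1/5 * cc p (x i) * PP p U (fun S => a (insert i S)) x := by
  unfold PP
  rw [Finset.sum_powerset_insert hi, Finset.mul_sum]
  congr 1
  refine Finset.sum_congr rfl fun S hS => ?_
  have hiS : i ∉ S := fun h => hi (Finset.mem_powerset.1 hS h)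
  rw [chi_insert p hiS, Finset.card_insert_of_notMem hiS]
  ring

lemma PP_update (p : ℝ) {i : Fin n} {U : Finset (Fin n)} (hi : i ∉ U)
    (a : Finset (Fin n) → ℝ) (x : Fin n → Bool) (b : Bool) :
    PP p U a (Function.update x i b) = PP p U a x := by
  unfold PP
  refine Finset.sum_congr rfl fun S hS => ?_
  rw [chi_update p fun h => hi (Finset.mem_powerset.1 hS h)]

lemma qq_insert_left {i : Fin n} {U S : Finset (Fin n)} (hi : i ∉ U) (hS : S ⊆ U)
    (a : Finset (Fin n) → ℝ) :
    qq (insert i U) S a = qq U S a + 4/25 * qq U S (fun S => a (insert i S)) := by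
  have hiS : i ∉ S := fun h => hi (hS h)
  unfold qq
  rw [Finset.insert_sdiff_of_notMem _ hiS,
    Finset.sum_powerset_insert (fun h => hi (Finset.mem_sdiff.1 h).1), Finset.mul_sum]
  congr 1
  refine Finset.sum_congr rfl fun T hT => ?_
  have hiT : i ∉ T := fun h => hi (Finset.mem_sdiff.1 (Finset.mem_powerset.1 hT h)).1
  rw [Finset.union_insert, Finset.card_insert_of_notMem hiT]
  ring

lemma qq_insert_both {i : Fin n} {U S : Finset (Fin n)} (hi : i ∉ U)
    (a : Finset (Fin n) → ℝ) :
    qq (insert i U) (insert i S) a = qq U S (fun S => a (insert i S)) := by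
  unfold qq
  have : insert i U \ insert i S = U \ S := by
    ext j
    simp only [Finset.mem_sdiff, Finset.mem_insert]
    by_cases h : j = i
    · subst h; simp [hi]
    · simp [h]
  rw [this]
  simp only [Finset.insert_union]

lemma main_ind {p : ℝ} (hp : 0 < p) (hp' : p ≤ 1/2) (U : Finset (Fin n)) :
    ∀ a b : Finset (Fin n) → ℝ,
    Ep p (fun x => PP p U a x ^ 2 * PP p U b x ^ 2)
    ≤ ∑ S ∈ U.powerset, ((3/625) / (p * (1 - p))) ^ S.card * (qq U S a * qq U S b) := by
  have hs : 0 < p * (1 - p) := mul_pos hp (by linarith)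
  induction U using Finset.induction_on with
  | empty =>
    intro a b
    have h1 : Ep (n := n) p (fun _ => 1) = 1 := by
      rw [Ep_eq]
      have := (Finset.prod_univ_sum (fun _ : Fin n => (Finset.univ : Finset Bool))
        (fun _ b => ww p b)).symm
      simp only [Fintype.piFinset_univ] at this
      simp only [mul_one]
      rw [this]
      simp [ww]
    have h2 := Ep_smul (n := n) p (a ∅ ^ 2 * b ∅ ^ 2) (fun _ => 1)
    rw [h1] at h2
    simp [PP, qq, chi] at h2 ⊢
    exact h2.le
  | insert i U hi ih =>
    intro a b
    set a' : Finset (Fin n) → ℝ := fun S => a (insert i S) with ha'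
    set b' : Finset (Fin n) → ℝ := fun S => b (insert i S) with hb'
    set K := (3/625) / (p * (1 - p)) with hK
    have hK0 : 0 ≤ K := by positivity
    rw [Ep_avg p i]
    have h1 : Ep p (fun x =>
        p * (PP p (insert i U) a (Function.update x i true) ^ 2
          * PP p (insert i U) b (Function.update x i true) ^ 2)
        + (1 - p) * (PP p (insert i U) a (Function.update x i false) ^ 2
          * PP p (insert i U) b (Function.update x i false) ^ 2))
        ≤ Ep p (fun x => PP p U a x ^ 2 * PP p U b x ^ 2
          + 4/25 * (PP p U a x ^ 2 * PP p U b' x ^ 2)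
          + 4/25 * (PP p U a' x ^ 2 * PP p U b x ^ 2)
          + K * (PP p U a' x ^ 2 * PP p U b' x ^ 2)) := by
      refine Ep_mono hp hp' fun x => ?_
      simp only [PP_insert p hi, PP_update p hi, Function.update_self]
      exact pointwise hp hp' _ _ _ _
    refine h1.trans ?_
    rw [Ep_add, Ep_add, Ep_add, Ep_smul, Ep_smul, Ep_smul]
    have i1 := ih a b
    have i2 := mul_le_mul_of_nonneg_left (ih a b') (show (0:ℝ) ≤ 4/25 by norm_num)
    have i3 := mul_le_mul_of_nonneg_left (ih a' b) (show (0:ℝ) ≤ 4/25 by norm_num)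
    have i4 := mul_le_mul_of_nonneg_left (ih a' b') hK0
    refine (add_le_add (add_le_add (add_le_add i1 i2) i3) i4).trans ?_
    rw [Finset.sum_powerset_insert hi]
    simp only [Finset.mul_sum, ← Finset.sum_add_distrib]
    refine Finset.sum_le_sum fun S hS => ?_
    have hSU := Finset.mem_powerset.1 hS
    have hiS : i ∉ S := fun h => hi (hSU h)
    rw [qq_insert_left hi hSU, qq_insert_left hi hSU, qq_insert_both hi, qq_insert_both hi,
      Finset.card_insert_of_notMem hiS, ← ha', ← hb']
    have : 0 ≤ K ^ S.card * (16/625 * (qq U S a' * qq U S b')) :=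
      mul_nonneg (by positivity)
        (mul_nonneg (by norm_num) (mul_nonneg (qq_nonneg _ _ _) (qq_nonneg _ _ _)))
    rw [pow_succ]
    nlinarith

lemma sum_qq (U : Finset (Fin n)) : ∀ a : Finset (Fin n) → ℝ,
    ∑ S ∈ U.powerset, (3/625 : ℝ) ^ S.card * qq U S a ≤ ∑ S ∈ U.powerset, a S ^ 2 := by
  induction U using Finset.induction_on with
  | empty => intro a; simp [qq]
  | insert i U hi ih =>
    intro a
    rw [Finset.sum_powerset_insert hi, Finset.sum_powerset_insert hi]
    have i1 := ih a
    have i2 := ih (fun S => a (insert i S))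
    set X := ∑ S ∈ U.powerset, (3/625 : ℝ) ^ S.card * qq U S (fun S => a (insert i S)) with hX
    have hX0 : 0 ≤ X := Finset.sum_nonneg fun S _ => mul_nonneg (by positivity) (qq_nonneg _ _ _)
    have e1 : ∑ S ∈ U.powerset, (3/625 : ℝ) ^ S.card * qq (insert i U) S a
        = ∑ S ∈ U.powerset, (3/625 : ℝ) ^ S.card * qq U S a + 4/25 * X := by
      rw [hX, Finset.mul_sum, ← Finset.sum_add_distrib]
      refine Finset.sum_congr rfl fun S hS => ?_
      rw [qq_insert_left hi (Finset.mem_powerset.1 hS)]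
      ring
    have e2 : ∑ S ∈ U.powerset, (3/625 : ℝ) ^ (insert i S).card * qq (insert i U) (insert i S) a
        = 3/625 * X := by
      rw [hX, Finset.mul_sum]
      refine Finset.sum_congr rfl fun S hS => ?_
      rw [qq_insert_both hi, Finset.card_insert_of_notMem
        (fun h => hi (Finset.mem_powerset.1 hS h))]
      ring
    rw [e1, e2]
    linarith

lemma qq_le (S : Finset (Fin n)) (a : Finset (Fin n) → ℝ) :
    qq Finset.univ S a ≤ ∑ T ∈ Finset.univ.filter (fun T => S ⊆ T), a T ^ 2 := by
  have : ∑ T ∈ Finset.univ.filter (fun T => S ⊆ T), a T ^ 2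
      = ∑ T ∈ (Finset.univ \ S).powerset, a (S ∪ T) ^ 2 := by
    refine Finset.sum_bij' (fun R _ => R \ S) (fun T _ => S ∪ T) ?_ ?_ ?_ ?_ ?_
    · intro R _
      exact Finset.mem_powerset.2 (Finset.sdiff_subset_sdiff (Finset.subset_univ _) subset_rfl)
    · intro T _
      simp
    · intro R hR
      exact Finset.union_sdiff_of_subset (Finset.mem_filter.1 hR).2
    · intro T hT
      have hT := Finset.mem_powerset.1 hT
      ext j
      have := @hT j
      simp only [Finset.mem_sdiff, Finset.mem_union] at this ⊢
      tauto
    · intro R hR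
      rw [Finset.union_sdiff_of_subset (Finset.mem_filter.1 hR).2]
  rw [this]
  refine Finset.sum_le_sum fun T _ => ?_
  exact mul_le_of_le_one_left (sq_nonneg _) (pow_le_one₀ (by norm_num) (by norm_num))

lemma Ep_one (p : ℝ) : Ep (n := n) p (fun _ => 1) = 1 := by
  rw [Ep_eq]
  have := (Finset.prod_univ_sum (fun _ : Fin n => (Finset.univ : Finset Bool))
    (fun _ b => ww p b)).symm
  simp only [Fintype.piFinset_univ] at this
  simp only [mul_one]
  rw [this]
  simp [ww]

lemma Ep_chi_sq {p : ℝ} (hp : 0 < p) (hp' : p ≤ 1/2) (S : Finset (Fin n)) :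
    Ep p (fun x => chi p S x * chi p S x) = 1 := by
  induction S using Finset.induction_on with
  | empty => simpa [chi] using Ep_one p
  | insert i S hi ih =>
    rw [Ep_avg p i]
    refine Eq.trans ?_ ih
    congr 1
    funext x
    simp only [chi_insert p hi, chi_update p hi, Function.update_self]
    linear_combination (chi p S x ^ 2) * (moments hp hp').2.1

lemma Ep_chi_ne_aux {p : ℝ} (hp : 0 < p) (hp' : p ≤ 1/2) {S T : Finset (Fin n)} {i : Fin n}
    (hS : i ∈ S) (hT : i ∉ T) :
    Ep p (fun x => chi p S x * chi p T x) = 0 := by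
  obtain ⟨R, hR, rfl⟩ : ∃ R, i ∉ R ∧ S = insert i R :=
    ⟨S.erase i, Finset.notMem_erase _ _, (Finset.insert_erase hS).symm⟩
  rw [Ep_avg p i]
  have : ∀ x : Fin n → Bool, p * (chi p (insert i R) (Function.update x i true)
      * chi p T (Function.update x i true))
      + (1 - p) * (chi p (insert i R) (Function.update x i false)
      * chi p T (Function.update x i false)) = 0 := by
    intro x
    simp only [chi_insert p hR, chi_update p hR, chi_update p hT, Function.update_self]
    linear_combination (chi p R x * chi p T x) * (moments hp hp').1
  simp only [this]
  simp [Ep]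

lemma Ep_chi {p : ℝ} (hp : 0 < p) (hp' : p ≤ 1/2) (S T : Finset (Fin n)) :
    Ep p (fun x => chi p S x * chi p T x) = if S = T then 1 else 0 := by
  split_ifs with h
  · subst h; exact Ep_chi_sq hp hp' S
  · by_cases hST : S ⊆ T
    · have : ¬ T ⊆ S := fun h' => h (Finset.Subset.antisymm hST h')
      obtain ⟨i, hi, hi'⟩ := Finset.not_subset.1 this
      simp only [mul_comm (chi p S _)]
      exact Ep_chi_ne_aux hp hp' hi hi'
    · obtain ⟨i, hi, hi'⟩ := Finset.not_subset.1 hST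
      exact Ep_chi_ne_aux hp hp' hi hi'

lemma bessel {p : ℝ} (hp : 0 < p) (hp' : p ≤ 1/2) (f : (Fin n → Bool) → ℝ) :
    ∑ S : Finset (Fin n), coeff p f S ^ 2 ≤ Ep p (fun x => f x ^ 2) := by
  have h0 := Ep_nonneg hp hp' (f := fun x =>
    (f x - ∑ S : Finset (Fin n), coeff p f S * chi p S x) ^ 2) (fun x => sq_nonneg _)
  have e : ∀ x, (f x - ∑ S : Finset (Fin n), coeff p f S * chi p S x) ^ 2
      = f x ^ 2 + ((-2) * ∑ S : Finset (Fin n), coeff p f S * (f x * chi p S x)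
        + ∑ S : Finset (Fin n), ∑ T : Finset (Fin n),
          coeff p f S * coeff p f T * (chi p S x * chi p T x)) := by
    intro x
    have h1 : ∑ S : Finset (Fin n), coeff p f S * (f x * chi p S x)
        = f x * ∑ S : Finset (Fin n), coeff p f S * chi p S x := by
      rw [Finset.mul_sum]
      exact Finset.sum_congr rfl fun _ _ => by ring
    have h2 : ∑ S : Finset (Fin n), ∑ T : Finset (Fin n),
          coeff p f S * coeff p f T * (chi p S x * chi p T x)
        = (∑ S : Finset (Fin n), coeff p f S * chi p S x) ^ 2 := by
      rw [sq, Finset.sum_mul_sum]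
      exact Finset.sum_congr rfl fun _ _ => Finset.sum_congr rfl fun _ _ => by ring
    rw [h1, h2]
    ring
  simp only [e] at h0
  rw [Ep_add, Ep_add, Ep_smul, Ep_sum, Ep_sum] at h0
  simp only [Ep_sum, Ep_smul, Ep_chi hp hp'] at h0
  have h3 : ∀ S, Ep p (fun x => f x * chi p S x) = coeff p f S := fun S => rfl
  simp only [h3] at h0
  simp at h0
  simp only [← sq] at h0
  linarith

lemma fourth {p β : ℝ} (hp : 0 < p) (hp' : p ≤ 1/2) (hβ : 0 < β)
    (f : (Fin n → Bool) → ℝ)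
    (hglob : ∀ S : Finset (Fin n), genInf p S f ≤ β * Ep p (fun x => f x ^ 2)) :
    Ep p (fun x => noise p (1/5) f x ^ 4) ≤ β * Ep p (fun x => f x ^ 2) ^ 2 := by
  have hs : 0 < p * (1 - p) := mul_pos hp (by linarith)
  set N := Ep p (fun x => f x ^ 2) with hN
  have hN0 : 0 ≤ N := Ep_nonneg hp hp' fun x => sq_nonneg _
  have h1 := main_ind hp hp' (Finset.univ : Finset (Fin n)) (coeff p f) (coeff p f)
  have e : ∀ x, PP p Finset.univ (coeff p f) x ^ 2 * PP p Finset.univ (coeff p f) x ^ 2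
      = noise p (1/5) f x ^ 4 := by
    intro x
    have : PP p Finset.univ (coeff p f) x = noise p (1/5) f x := by
      simp [PP, noise]
    rw [this]; ring
  simp only [e] at h1
  refine h1.trans ?_
  have h2 : ∀ S ∈ (Finset.univ : Finset (Fin n)).powerset,
      ((3/625) / (p * (1 - p))) ^ S.card
        * (qq Finset.univ S (coeff p f) * qq Finset.univ S (coeff p f))
      ≤ β * N * ((3/625 : ℝ) ^ S.card * qq Finset.univ S (coeff p f)) := by
    intro S _
    have h3 := hglob S
    rw [genInf, div_le_iff₀ (by positivity)] at h3
    have h4 := (qq_le S (coeff p f)).trans h3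
    have h5 : ((3/625) / (p * (1 - p))) ^ S.card * (p * (1 - p)) ^ S.card
        = (3/625 : ℝ) ^ S.card := by
      rw [← mul_pow, div_mul_cancel₀ _ hs.ne']
    calc _ ≤ ((3/625) / (p * (1 - p))) ^ S.card
        * (β * N * (p * (1 - p)) ^ S.card * qq Finset.univ S (coeff p f)) := by
          refine mul_le_mul_of_nonneg_left ?_ (by positivity)
          exact mul_le_mul_of_nonneg_right h4 (qq_nonneg _ _ _)
      _ = _ := by rw [← h5]; ring
  refine (Finset.sum_le_sum h2).trans ?_
  rw [← Finset.mul_sum]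
  have h6 := (sum_qq Finset.univ (coeff p f)).trans
    (by simpa using bessel hp hp' f)
  calc _ ≤ β * N * N := mul_le_mul_of_nonneg_left h6 (by positivity)
    _ = _ := by ring

/-- hypercontractivity for functions with `β`-small generalised influences. -/
theorem statement0 {n : ℕ} (p β : ℝ) (hp : 0 < p) (hp' : p ≤ 1/2) (hβ : 0 < β)
    (f : (Fin n → Bool) → ℝ)
    (hglob : ∀ S : Finset (Fin n), genInf p S f ≤ β * Ep p (fun x => f x ^ 2)) :
    pnorm p 4 (noise p (1/5) f) ≤ β ^ ((1 : ℝ)/4) * pnorm p 2 f := by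
  have hN0 : 0 ≤ Ep p (fun x => f x ^ 2) := Ep_nonneg hp hp' fun x => sq_nonneg _
  have hM0 : 0 ≤ Ep p (fun x => noise p (1/5) f x ^ 4) :=
    Ep_nonneg hp hp' fun x => by positivity
  have h4 : ∀ y : ℝ, |y| ^ (4 : ℝ) = y ^ 4 := by
    intro y
    rw [show (4 : ℝ) = ((4 : ℕ) : ℝ) by norm_num, Real.rpow_natCast]
    exact Even.pow_abs (by decide) y
  have h2 : ∀ y : ℝ, |y| ^ (2 : ℝ) = y ^ 2 := by
    intro y
    rw [show (2 : ℝ) = ((2 : ℕ) : ℝ) by norm_num, Real.rpow_natCast]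
    exact Even.pow_abs (by decide) y
  unfold pnorm
  simp only [h4, h2]
  have hmain := Real.rpow_le_rpow hM0 (fourth hp hp' hβ f hglob) (show (0:ℝ) ≤ 1/4 by norm_num)
  refine hmain.trans (le_of_eq ?_)
  rw [Real.mul_rpow hβ.le (by positivity), ← Real.rpow_natCast, ← Real.rpow_mul hN0]
  norm_num

end GlobalHC
end

section
/- Let f : {0,1}^n → {0,1} be a Boolean function on the cube equipped with the uniform measure μ_{1/2}, and let r ∈ ℕ with r ≥ 1. Then ‖f^{≤r}‖₂² ≤ 3^r·μ_{1/2}(f)^{3/2}. -/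
open Finset

namespace GlobalHC

variable {n : ℕ}

lemma Ep_half (f : (Fin n → Bool) → ℝ) : Ep (1/2) f = (1/2)^n * ∑ x, f x := by
  unfold Ep
  rw [Finset.mul_sum]
  refine Finset.sum_congr rfl fun x _ => ?_
  congr 1
  have : ∀ i : Fin n, (if x i then (1/2:ℝ) else 1 - 1/2) = 1/2 := by
    intro i; split_ifs <;> norm_num
  simp only [this]
  simp

lemma E_add (f g : (Fin n → Bool) → ℝ) :
    Ep (1/2) (fun x => f x + g x) = Ep (1/2) f + Ep (1/2) g := by
  simp only [Ep_half, Finset.sum_add_distrib, mul_add]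

lemma E_smul (c : ℝ) (f : (Fin n → Bool) → ℝ) :
    Ep (1/2) (fun x => c * f x) = c * Ep (1/2) f := by
  simp only [Ep_half, ← Finset.mul_sum]; ring

lemma E_nonneg (f : (Fin n → Bool) → ℝ) (h : ∀ x, 0 ≤ f x) : 0 ≤ Ep (1/2) f := by
  rw [Ep_half]
  exact mul_nonneg (by positivity) (Finset.sum_nonneg fun x _ => h x)

lemma E_cs (f g : (Fin n → Bool) → ℝ) :
    Ep (1/2) (fun x => f x * g x) ^ 2
      ≤ Ep (1/2) (fun x => f x ^ 2) * Ep (1/2) (fun x => g x ^ 2) := by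
  simp only [Ep_half]
  have := Finset.sum_mul_sq_le_sq_mul_sq Finset.univ f g
  have h2 : (0:ℝ) ≤ ((1/2)^n)^2 := by positivity
  nlinarith [mul_le_mul_of_nonneg_left this h2]

def flip (i : Fin n) (x : Fin n → Bool) : Fin n → Bool := Function.update x i (!x i)

lemma flip_flip (i : Fin n) : Function.Involutive (flip i) := by
  intro x
  simp [flip]

lemma E_flip (i : Fin n) (f : (Fin n → Bool) → ℝ) :
    Ep (1/2) (fun x => f (flip i x)) = Ep (1/2) f := by
  simp only [Ep_half]
  congr 1
  exact Equiv.sum_comp (flip_flip i).toPerm f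

noncomputable def sg (i : Fin n) (x : Fin n → Bool) : ℝ := if x i then 1 else -1

lemma sg_flip (i : Fin n) (x : Fin n → Bool) : sg i (flip i x) = - sg i x := by
  unfold sg flip
  cases h : x i <;> simp

lemma sg_sq (i : Fin n) (x : Fin n → Bool) : sg i x ^ 2 = 1 := by
  unfold sg
  split_ifs <;> norm_num

lemma chi_half (S : Finset (Fin n)) (x : Fin n → Bool) : chi (1/2) S x = ∏ i ∈ S, sg i x := by
  unfold chi sg
  refine Finset.prod_congr rfl fun i _ => ?_
  have : Real.sqrt (1/2 * (1 - 1/2)) = 1/2 := by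
    rw [show (1/2 * (1 - 1/2) : ℝ) = (1/2)^2 by norm_num]
    exact Real.sqrt_sq (by norm_num)
  rw [this]
  split_ifs <;> norm_num

lemma chi_flip (i : Fin n) (S : Finset (Fin n)) (h : i ∉ S) (x : Fin n → Bool) :
    chi (1/2) S (flip i x) = chi (1/2) S x := by
  simp only [chi_half]
  refine Finset.prod_congr rfl fun j hj => ?_
  have : j ≠ i := fun e => h (e ▸ hj)
  simp [sg, flip, this]

lemma E_sg (i : Fin n) (h : (Fin n → Bool) → ℝ) (hh : ∀ x, h (flip i x) = h x) :
    Ep (1/2) (fun x => sg i x * h x) = 0 := by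
  have := E_flip i (fun x => sg i x * h x)
  simp only [sg_flip, hh] at this
  have h2 := E_smul (-1) (fun x => sg i x * h x)
  have h3 : (fun x => -1 * (sg i x * h x)) = fun x => -sg i x * h x := by
    funext x; ring
  rw [h3] at h2
  linarith

noncomputable def G (a : Finset (Fin n) → ℝ) (A : Finset (Fin n)) (x : Fin n → Bool) : ℝ :=
  ∑ S ∈ A.powerset, a S * chi (1/2) S x

lemma G_insert (a : Finset (Fin n) → ℝ) (A : Finset (Fin n)) (i : Fin n) (hi : i ∉ A)
    (x : Fin n → Bool) :
    G a (insert i A) x = G a A x + sg i x * G (fun S => a (insert i S)) A x := by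
  unfold G
  rw [Finset.sum_powerset_insert hi, Finset.mul_sum]
  congr 1
  refine Finset.sum_congr rfl fun S hS => ?_
  have : i ∉ S := fun h => hi (Finset.mem_powerset.1 hS h)
  rw [chi_half, chi_half, Finset.prod_insert this]
  ring

lemma G_flip (a : Finset (Fin n) → ℝ) (A : Finset (Fin n)) (i : Fin n) (hi : i ∉ A)
    (x : Fin n → Bool) : G a A (flip i x) = G a A x := by
  unfold G
  refine Finset.sum_congr rfl fun S hS => ?_
  rw [chi_flip i S (fun h => hi (Finset.mem_powerset.1 hS h))]

lemma E_one : Ep (1/2) (fun _ : Fin n → Bool => (1:ℝ)) = 1 := by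
  rw [Ep_half]
  simp

lemma parseval (A : Finset (Fin n)) : ∀ a : Finset (Fin n) → ℝ,
    Ep (1/2) (fun x => G a A x ^ 2) = ∑ S ∈ A.powerset, a S ^ 2 := by
  induction A using Finset.induction_on with
  | empty =>
    intro a
    have h := E_smul (n := n) (a ∅ ^ 2) (fun _ => 1)
    rw [E_one] at h
    simpa [G, chi] using h
  | insert i A hi ih =>
    intro a
    rw [Finset.sum_powerset_insert hi, ← ih a, ← ih (fun S => a (insert i S))]
    set b := fun S => a (insert i S)
    have e : (fun x => G a (insert i A) x ^ 2) =
        fun x => (G a A x ^ 2 + G b A x ^ 2) + sg i x * (2 * G a A x * G b A x) := by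
      funext x
      rw [G_insert a A i hi]
      linear_combination (G b A x ^ 2) * sg_sq i x
    rw [e, E_add, E_add, E_sg i, add_zero]
    intro x
    rw [G_flip a A i hi, G_flip b A i hi]

lemma bonami (A : Finset (Fin n)) : ∀ a : Finset (Fin n) → ℝ,
    Ep (1/2) (fun x => G a A x ^ 4) ≤ (∑ S ∈ A.powerset, 3 ^ S.card * a S ^ 2) ^ 2 := by
  induction A using Finset.induction_on with
  | empty =>
    intro a
    have h := E_smul (n := n) (a ∅ ^ 4) (fun _ => 1)
    rw [E_one] at h
    have h' : Ep (1/2) (fun _ : Fin n → Bool => a ∅ ^ 4) = a ∅ ^ 4 := by simpa using h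
    simp only [G, chi_half, Finset.powerset_empty, Finset.sum_singleton, Finset.prod_empty,
      mul_one, h', Finset.card_empty, pow_zero, one_mul]
    exact le_of_eq (by ring)
  | insert i A hi ih =>
    intro a
    rw [Finset.sum_powerset_insert hi]
    set b := fun S => a (insert i S) with hb
    have e2 : ∑ S ∈ A.powerset, (3:ℝ) ^ (insert i S).card * a (insert i S) ^ 2
        = 3 * ∑ S ∈ A.powerset, 3 ^ S.card * b S ^ 2 := by
      rw [Finset.mul_sum]
      refine Finset.sum_congr rfl fun S hS => ?_
      rw [Finset.card_insert_of_notMem (fun h => hi (Finset.mem_powerset.1 hS h)), pow_succ]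
      ring
    rw [e2]
    have hu := ih a
    have hv := ih b
    set U := ∑ S ∈ A.powerset, (3:ℝ) ^ S.card * a S ^ 2
    set V := ∑ S ∈ A.powerset, (3:ℝ) ^ S.card * b S ^ 2
    have U0 : 0 ≤ U := Finset.sum_nonneg fun S _ => by positivity
    have V0 : 0 ≤ V := Finset.sum_nonneg fun S _ => by positivity
    have e : (fun x => G a (insert i A) x ^ 4) =
        fun x => ((G a A x ^ 4 + 6 * (G a A x ^ 2 * G b A x ^ 2)) + G b A x ^ 4)
          + sg i x * (4 * G a A x ^ 3 * G b A x + 4 * G a A x * G b A x ^ 3) := by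
      funext x
      rw [G_insert a A i hi]
      linear_combination (6 * G a A x ^ 2 * G b A x ^ 2 + 4 * G a A x * G b A x ^ 3 * sg i x
        + G b A x ^ 4 * (sg i x ^ 2 + 1)) * sg_sq i x
    rw [e, E_add, E_add, E_add, E_smul, E_sg i, add_zero]
    · have cs := E_cs (fun x => G a A x ^ 2) (fun x => G b A x ^ 2)
      simp only [← pow_mul] at cs
      norm_num only at cs
      have v4 : 0 ≤ Ep (1/2) (fun x => G b A x ^ 4) := E_nonneg _ fun x => by positivity
      have : Ep (1/2) (fun x => G a A x ^ 2 * G b A x ^ 2) ≤ U * V := by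
        refine le_of_abs_le (abs_le_of_sq_le_sq ?_ (mul_nonneg U0 V0))
        calc _ ≤ _ := cs
          _ ≤ U ^ 2 * V ^ 2 := mul_le_mul hu hv v4 (by positivity)
          _ = _ := by ring
      nlinarith [sq_nonneg V]
    · intro x
      rw [G_flip a A i hi, G_flip b A i hi]

/-- low-degree Fourier weight of a Boolean function on the uniform cube. -/
theorem statement7 {n : ℕ} (r : ℕ) (hr : 1 ≤ r)
    (f : (Fin n → Bool) → ℝ) (hbool : ∀ x, f x = 0 ∨ f x = 1) :
    pnorm (1/2) 2 (trunc (1/2) r f) ^ 2 ≤ 3 ^ r * Ep (1/2) f ^ ((3 : ℝ)/2) := by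
  classical
  set a : Finset (Fin n) → ℝ := fun S => if S.card ≤ r then coeff (1/2) f S else 0 with ha
  have hg : trunc (1/2) r f = G a Finset.univ := by
    funext x
    simp only [trunc, G, ha, Finset.powerset_univ, Finset.sum_filter, ite_mul, zero_mul]
  have hf2 : ∀ x, f x ^ 2 = f x := fun x => by rcases hbool x with h | h <;> simp [h]
  have hm0 : 0 ≤ Ep (1/2) f := E_nonneg _ fun x => by rw [← hf2]; positivity
  have hW : pnorm (1/2) 2 (trunc (1/2) r f) ^ 2 = Ep (1/2) (fun x => G a Finset.univ x ^ 2) := by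
    have h0 : 0 ≤ Ep (1/2) (fun x => G a Finset.univ x ^ 2) := E_nonneg _ fun x => by positivity
    rw [hg]
    unfold pnorm
    simp only [Real.rpow_two, sq_abs]
    rw [← Real.sqrt_eq_rpow, Real.sq_sqrt h0]
  rw [hW]
  have hP := parseval Finset.univ a
  have hB := bonami Finset.univ a
  have hfg : Ep (1/2) (fun x => f x * G a Finset.univ x)
      = Ep (1/2) (fun x => G a Finset.univ x ^ 2) := by
    rw [hP, Ep_half]
    simp only [G, Finset.mul_sum]
    rw [Finset.sum_comm]
    refine Finset.sum_congr rfl fun S _ => ?_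
    have : a S ^ 2 = a S * coeff (1/2) f S := by
      simp only [ha]; split_ifs <;> ring
    rw [this, coeff, Ep_half, Finset.mul_sum, Finset.mul_sum]
    refine Finset.sum_congr rfl fun x _ => ?_
    ring
  have hB' : Ep (1/2) (fun x => G a Finset.univ x ^ 4)
      ≤ (3 ^ r * Ep (1/2) (fun x => G a Finset.univ x ^ 2)) ^ 2 := by
    refine hB.trans (pow_le_pow_left₀ (Finset.sum_nonneg fun S _ => by positivity) ?_ 2)
    rw [hP, Finset.mul_sum]
    refine Finset.sum_le_sum fun S _ => ?_
    by_cases h : S.card ≤ r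
    · exact mul_le_mul_of_nonneg_right (pow_le_pow_right₀ (by norm_num) h) (sq_nonneg _)
    · simp [ha, h]
  have c1 := E_cs f (fun x => f x * G a Finset.univ x)
  have c2 := E_cs f (fun x => G a Finset.univ x ^ 2)
  simp only [mul_pow, ← mul_assoc, ← pow_two, hf2, ← pow_mul] at c1 c2
  norm_num only at c1 c2
  norm_num only at hfg hB' hm0 ⊢
  rw [hfg] at c1
  have hW0 : 0 ≤ Ep (1/2) (fun x => G a Finset.univ x ^ 2) := E_nonneg _ fun x => by positivity
  set W := Ep (1/2) (fun x => G a Finset.univ x ^ 2)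
  set m := Ep (1/2) f
  set Q := Ep (1/2) (fun x => f x * G a Finset.univ x ^ 2)
  have h4 : W ^ 2 * W ^ 2 ≤ W ^ 2 * ((3 ^ r) ^ 2 * m ^ 3) := by
    calc W ^ 2 * W ^ 2 ≤ (m * Q) * (m * Q) :=
          mul_le_mul c1 c1 (sq_nonneg _) ((sq_nonneg _).trans c1)
      _ = m ^ 2 * Q ^ 2 := by ring
      _ ≤ m ^ 2 * (m * (3 ^ r * W) ^ 2) :=
          mul_le_mul_of_nonneg_left (c2.trans (mul_le_mul_of_nonneg_left hB' hm0)) (sq_nonneg _)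
      _ = _ := by ring
  rcases hW0.eq_or_lt with h | h
  · rw [← h]; positivity
  · have h5 := le_of_mul_le_mul_left h4 (by positivity)
    refine le_of_abs_le (abs_le_of_sq_le_sq ?_ (by positivity))
    rw [mul_pow, ← Real.rpow_natCast (m ^ _), ← Real.rpow_mul hm0]
    norm_num
    exact h5

end GlobalHC
end
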